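/- Let η = (η^1, …, η^k) be a smooth ℝ^k-valued differential one-form on an open set U ⊆ ℝ^m with Reeb vector fields R_1, …, R_k, and let X be an η-Hamiltonian vector field with η-Hamiltonian k-function h = (h^1, …, h^k). On W := ℝ^k × U with points (z, x) = (z^1,…,z^k, x), consider the smooth one-form θ on W defined by θ_{(z,x)}(w, v) := Σ_{α=1}^k z^α · η^α_x(v) for (w, v) ∈ ℝ^k × ℝ^m, its exterior derivative ω := dθ (a closed two-form on W), and the vector field Z on W given by Z(z, x) := ((Σ_{α=1}^k z^α·(R_βh^α)(x))_{β=1,…,k}, X(x)). Then ι_Zω = dF, where F(z, x) := Σ_{α=1}^k z^α h^α(x); in particular Z is a Hamiltonian vector field of the presymplectic (closed) two-form ω. (This is the computational content of the proposition that every k-contact Hamiltonian system on M gives rise to a presymplectic Hamiltonian system on ℝ^k × M.) -/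

import Mathlib

/-- Exterior derivative of a one-form: `dθ_x(u, v) = Dθ(x)(u)(v) − Dθ(x)(v)(u)`. -/
noncomputable def extD {E : Type*} [NormedAddCommGroup E] [NormedSpace ℝ E]
    (θ : E → (E →L[ℝ] ℝ)) (x u v : E) : ℝ :=
  fderiv ℝ θ x u v - fderiv ℝ θ x v u

/-!
On `ℝ^k × U` one has `ω = Σ_α dz^α ∧ η^α + Σ_α z^α dη^α`. Contracting with `Z = (a, X)` gives
`Σ_α a^α η^α - Σ_α η^α(X) dz^α + Σ_α z^α ι_X dη^α`. The Hamilton equations turn the middle sum into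
`+ Σ_α h^α dz^α` and the last one into `Σ_α z^α dh^α - Σ_{α,β} z^α (R_β h^α) η^β`, and the choice
`a^β = Σ_α z^α (R_β h^α)` cancels the `η`-terms, leaving `dF`.
-/

section FiberLinear

variable {𝕜 ι E G : Type*} [Fintype ι]

/-- The fibrewise linear map `(z, x) ↦ Σ_α z^α g^α(x)` on the trivial bundle `𝕜^ι × E → E`
determined by a family `g`. For scalar `g` it is the Hamiltonian `F`; for a family of one-forms it
is the one-form `θ` before precomposition with the projection to `E`. -/
def fiberLinear [Semiring 𝕜] [AddCommMonoid G] [Module 𝕜 G]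
    (g : ι → E → G) (p : (ι → 𝕜) × E) : G :=
  ∑ α, p.1 α • g α p.2

variable [NontriviallyNormedField 𝕜] [NormedAddCommGroup E] [NormedSpace 𝕜 E]
  [NormedAddCommGroup G] [NormedSpace 𝕜 G] {g : ι → E → G} {x : E}

theorem hasFDerivAt_fiberLinear {g' : ι → E →L[𝕜] G}
    (hg : ∀ α, HasFDerivAt (g α) (g' α) x) (z : ι → 𝕜) :
    HasFDerivAt (fiberLinear g)
      (∑ α, (z α • (g' α).comp (.snd 𝕜 (ι → 𝕜) E) +
        ((ContinuousLinearMap.proj α).comp (.fst 𝕜 (ι → 𝕜) E)).smulRight (g α x)))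
      (z, x) := by
  refine HasFDerivAt.fun_sum fun α _ ↦ ?_
  have hz : HasFDerivAt (fun p : (ι → 𝕜) × E ↦ p.1 α)
      ((ContinuousLinearMap.proj α).comp (.fst 𝕜 (ι → 𝕜) E)) (z, x) :=
    ((ContinuousLinearMap.proj α).comp (.fst 𝕜 (ι → 𝕜) E)).hasFDerivAt
  exact hz.fun_smul ((hg α).comp (z, x) hasFDerivAt_snd)

theorem fderiv_fiberLinear_apply (hg : ∀ α, DifferentiableAt 𝕜 (g α) x) (z w : ι → 𝕜) (v : E) :
    fderiv 𝕜 (fiberLinear g) (z, x) (w, v) =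
      ∑ α, (z α • fderiv 𝕜 (g α) x v + w α • g α x) := by
  simp [(hasFDerivAt_fiberLinear (fun α ↦ (hg α).hasFDerivAt) z).fderiv]

end FiberLinear

section LiouvilleForm

variable {ι E : Type*} [Fintype ι] [NormedAddCommGroup E] [NormedSpace ℝ E]
  {η : ι → E → E →L[ℝ] ℝ} {x : E}

/-- The one-form `θ_{(z,x)}(w, v) = Σ_α z^α η^α_x(v)` on `ℝ^ι × E`, analogous to the Liouville form
of a cotangent bundle; `extD (liouvilleForm η)` is the presymplectic form `ω`. -/
noncomputable def liouvilleForm (η : ι → E → E →L[ℝ] ℝ) (p : (ι → ℝ) × E) :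
    (ι → ℝ) × E →L[ℝ] ℝ :=
  (fiberLinear η p).comp (.snd ℝ (ι → ℝ) E)

theorem liouvilleForm_apply (η : ι → E → E →L[ℝ] ℝ) (z w : ι → ℝ) (x v : E) :
    liouvilleForm η (z, x) (w, v) = ∑ α, z α * η α x v := by
  simp [liouvilleForm, fiberLinear]

theorem fderiv_liouvilleForm_apply (hη : ∀ α, DifferentiableAt ℝ (η α) x)
    (z a w : ι → ℝ) (u v : E) :
    fderiv ℝ (liouvilleForm η) (z, x) (a, u) (w, v) =
      ∑ α, (z α * fderiv ℝ (η α) x u v + a α * η α x v) := by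
  have hdiff : DifferentiableAt ℝ (fiberLinear η) (z, x) :=
    (hasFDerivAt_fiberLinear (fun α ↦ (hη α).hasFDerivAt) z).differentiableAt
  have hderiv : HasFDerivAt (liouvilleForm η) _ (z, x) :=
    hdiff.hasFDerivAt.clm_comp (hasFDerivAt_const (ContinuousLinearMap.snd ℝ (ι → ℝ) E) (z, x))
  simp [hderiv.fderiv, fderiv_fiberLinear_apply hη]

theorem extD_liouvilleForm (hη : ∀ α, DifferentiableAt ℝ (η α) x)
    (z a w : ι → ℝ) (u v : E) :
    extD (liouvilleForm η) (z, x) (a, u) (w, v) =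
      ∑ α, a α * η α x v - ∑ α, w α * η α x u + ∑ α, z α * extD (η α) x u v := by
  simp only [extD, fderiv_liouvilleForm_apply hη, mul_sub, Finset.sum_add_distrib,
    Finset.sum_sub_distrib]
  ring

end LiouvilleForm

/-- In `stmt_12` the multiplier `c α β` is the Reeb derivative `R_β h^α` at `x`. -/
theorem stmt_12_general {ι E : Type*} [Fintype ι] [NormedAddCommGroup E] [NormedSpace ℝ E]
    {η : ι → E → E →L[ℝ] ℝ} {h : ι → E → ℝ} {x : E}
    (hη : ∀ α, DifferentiableAt ℝ (η α) x) (hh : ∀ α, DifferentiableAt ℝ (h α) x)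
    {c : ι → ι → ℝ} {u : E}
    (hHam : ∀ α, η α x u = -h α x ∧
      ∀ v, extD (η α) x u v = fderiv ℝ (h α) x v - ∑ β, c α β * η β x v)
    {θ : (ι → ℝ) × E → (ι → ℝ) × E →L[ℝ] ℝ}
    (hθ : ∀ z x w v, θ (z, x) (w, v) = ∑ α, z α * η α x v)
    {F : (ι → ℝ) × E → ℝ} (hF : ∀ z x, F (z, x) = ∑ α, z α * h α x)
    (z : ι → ℝ) (p : (ι → ℝ) × E) :
    extD θ (z, x) (fun β ↦ ∑ α, z α * c α β, u) p = fderiv ℝ F (z, x) p := by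
  obtain ⟨w, v⟩ := p
  obtain rfl : θ = liouvilleForm η := funext fun _ ↦ ContinuousLinearMap.ext fun _ ↦
    (hθ ..).trans (liouvilleForm_apply ..).symm
  obtain rfl : F = fiberLinear h := funext fun _ ↦ hF ..
  have multiplier_terms_eq : ∑ β, (∑ α, z α * c α β) * η β x v =
      ∑ α, z α * ∑ β, c α β * η β x v := by
    simp only [Finset.sum_mul, Finset.mul_sum, mul_assoc]
    exact Finset.sum_comm
  calc extD (liouvilleForm η) (z, x) (fun β ↦ ∑ α, z α * c α β, u) (w, v)
    _ = ∑ β, (∑ α, z α * c α β) * η β x v - ∑ α, w α * η α x u +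
          ∑ α, z α * extD (η α) x u v := extD_liouvilleForm hη ..
    _ = ∑ α, z α * fderiv ℝ (h α) x v + ∑ α, w α * h α x := by
      simp only [multiplier_terms_eq, (hHam _).1, (hHam _).2, mul_neg, mul_sub,
        Finset.sum_neg_distrib, Finset.sum_sub_distrib]
      ring
    _ = fderiv ℝ (fiberLinear h) (z, x) (w, v) := by
      simp only [fderiv_fiberLinear_apply hh, smul_eq_mul, Finset.sum_add_distrib]

/-- **Presymplectification of a k-contact Hamiltonian vector field.** Let `X` be an
`η`-Hamiltonian vector field with `η`-Hamiltonian k-function `h` relative to a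
smooth `ℝ^k`-valued one-form `η` on an open `U ⊆ ℝ^m` with Reeb vector fields
`R_1, …, R_k`. On `W = ℝ^k × U` consider the one-form
`θ_{(z,x)}(w,v) = Σ_α z^α η^α_x(v)`, its exterior derivative `ω = dθ`, the vector
field `Z(z,x) = ((Σ_α z^α (R_βh^α)(x))_β, X(x))` and the function
`F(z,x) = Σ_α z^α h^α(x)`. Then `ι_Zω = dF` on `W`, so `Z` is a Hamiltonian
vector field of the presymplectic form `ω`. -/
theorem stmt_12 (m k : ℕ) (U : Set (Fin m → ℝ)) (hU : IsOpen U)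
    (η : Fin k → (Fin m → ℝ) → ((Fin m → ℝ) →L[ℝ] ℝ))
    (hη : ∀ α, ContDiffOn ℝ (⊤ : ℕ∞) (η α) U)
    (R : Fin k → (Fin m → ℝ) → (Fin m → ℝ))
    (hRs : ∀ α, ContDiffOn ℝ (⊤ : ℕ∞) (R α) U)
    (hReeb : ∀ x ∈ U, ∀ α β : Fin k,
      η β x (R α x) = (if α = β then (1 : ℝ) else 0) ∧
      ∀ v, extD (η β) x (R α x) v = 0)
    (X : (Fin m → ℝ) → (Fin m → ℝ)) (hX : ContDiffOn ℝ (⊤ : ℕ∞) X U)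
    (h : Fin k → (Fin m → ℝ) → ℝ)
    (hhs : ∀ α, ContDiffOn ℝ (⊤ : ℕ∞) (h α) U)
    (hHam : ∀ x ∈ U, ∀ α : Fin k,
      η α x (X x) = -(h α x) ∧
      ∀ v, extD (η α) x (X x) v =
        fderiv ℝ (h α) x v - ∑ β, fderiv ℝ (h α) x (R β x) * η β x v)
    (θ : ((Fin k → ℝ) × (Fin m → ℝ)) → (((Fin k → ℝ) × (Fin m → ℝ)) →L[ℝ] ℝ))
    (hθ : ∀ (z : Fin k → ℝ) (x : Fin m → ℝ) (w : Fin k → ℝ) (v : Fin m → ℝ),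
      θ (z, x) (w, v) = ∑ α, z α * η α x v)
    (hθs : ContDiffOn ℝ (⊤ : ℕ∞) θ ((Set.univ : Set (Fin k → ℝ)) ×ˢ U))
    (Z : ((Fin k → ℝ) × (Fin m → ℝ)) → ((Fin k → ℝ) × (Fin m → ℝ)))
    (hZ : ∀ (z : Fin k → ℝ) (x : Fin m → ℝ),
      Z (z, x) = ((fun β => ∑ α, z α * fderiv ℝ (h α) x (R β x)), X x))
    (F : ((Fin k → ℝ) × (Fin m → ℝ)) → ℝ)
    (hF : ∀ (z : Fin k → ℝ) (x : Fin m → ℝ), F (z, x) = ∑ α, z α * h α x) :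
    ∀ (z : Fin k → ℝ), ∀ x ∈ U, ∀ p : (Fin k → ℝ) × (Fin m → ℝ),
      extD θ (z, x) (Z (z, x)) p = fderiv ℝ F (z, x) p := by
  intro z x hx
  have hηx (α) : DifferentiableAt ℝ (η α) x :=
    ((hη α).differentiableOn (by simp)).differentiableAt (hU.mem_nhds hx)
  have hhx (α) : DifferentiableAt ℝ (h α) x :=
    ((hhs α).differentiableOn (by simp)).differentiableAt (hU.mem_nhds hx)
  rw [hZ]
  exact stmt_12_general hηx hhx (hHam x hx) hθ hF z
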